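/- arXiv:2601.20812 — 2 statements merged into one kernel-verified Lean document; each statement's English description precedes it below -/
import Mathlib

section
/- Let n ≥ 1, let s_1, …, s_{n+1} be points in ℝ^d, and let σ_tr : ℝ → ℝ satisfy σ_tr(0) > 0, σ_tr(h) ≥ 0 for all h ≥ 0, σ_tr(h) ≤ σ_tr(0) for all h ≥ 0, and σ_tr(‖s_i − s_{n+1}‖) = 0 for every i = 1, …, n (the new observation is independent of the existing sample). Define ESS_F^{(m)} = m² σ_tr(0) · (∑_{i=1}^m ∑_{j=1}^m σ_tr(‖s_i − s_j‖))^{-1} for m = n and m = n+1. Then ESS_F^{(n+1)} > ESS_F^{(n)}. -/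
/-! Write `S` for the double sum over the original sample. Since the new observation is
uncorrelated with the old ones, the enlarged double sum is `S + σtr 0`, so the claim reads
`n² (S + σtr 0) < (n + 1)² S`, that is `n² σtr 0 < (2n + 1) S`. This follows from
`S ≥ n σtr 0`, which holds because the diagonal contributes `n σtr 0` and the off-diagonal
terms are nonnegative. -/

open Finset

/-- Adding a new functional observation `s n` (indices `0, …, n-1` are the original
sample and `s n` is the new one) that is independent of the existing sample
(zero trace-covariogram with every existing location) strictly increases the
functional effective sample size. -/
theorem functional_ess_strict_mono {d n : ℕ} (hn : 1 ≤ n)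
    (s : ℕ → EuclideanSpace ℝ (Fin d)) (σtr : ℝ → ℝ)
    (h0 : 0 < σtr 0)
    (hnonneg : ∀ h : ℝ, 0 ≤ h → 0 ≤ σtr h)
    (hmax : ∀ h : ℝ, 0 ≤ h → σtr h ≤ σtr 0)
    (hindep : ∀ i < n, σtr ‖s i - s n‖ = 0) :
    (n : ℝ) ^ 2 * σtr 0 *
        (∑ i ∈ Finset.range n, ∑ j ∈ Finset.range n, σtr ‖s i - s j‖)⁻¹ <
      ((n + 1 : ℕ) : ℝ) ^ 2 * σtr 0 *
        (∑ i ∈ Finset.range (n + 1), ∑ j ∈ Finset.range (n + 1), σtr ‖s i - s j‖)⁻¹ := by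
  have hS : (n : ℝ) * σtr 0 ≤
      ∑ i ∈ Finset.range n, ∑ j ∈ Finset.range n, σtr ‖s i - s j‖ := by
    calc (n : ℝ) * σtr 0 = ∑ i ∈ Finset.range n, σtr ‖s i - s i‖ := by simp
      _ ≤ _ := Finset.sum_le_sum fun i hi =>
        Finset.single_le_sum (f := fun j => σtr ‖s i - s j‖)
          (fun j _ => hnonneg _ (norm_nonneg _)) hi
  have hcol : ∑ i ∈ Finset.range n, σtr ‖s i - s n‖ = 0 :=
    Finset.sum_eq_zero fun i hi => hindep i (Finset.mem_range.mp hi)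
  have hrow : ∑ j ∈ Finset.range n, σtr ‖s n - s j‖ = 0 :=
    Finset.sum_eq_zero fun j hj => by
      rw [norm_sub_rev]
      exact hindep j (Finset.mem_range.mp hj)
  have hsum : ∑ i ∈ Finset.range (n + 1), ∑ j ∈ Finset.range (n + 1), σtr ‖s i - s j‖ =
      (∑ i ∈ Finset.range n, ∑ j ∈ Finset.range n, σtr ‖s i - s j‖) + σtr 0 := by
    simp only [Finset.sum_range_succ, Finset.sum_add_distrib, hcol, hrow, sub_self, norm_zero,
      add_zero, zero_add]
  rw [hsum]
  generalize (∑ i ∈ Finset.range n, ∑ j ∈ Finset.range n, σtr ‖s i - s j‖) = S at hS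
  have hn' : (1 : ℝ) ≤ n := by exact_mod_cast hn
  have hnσ : 0 < (n : ℝ) * σtr 0 := by positivity
  have hSpos : 0 < S := hnσ.trans_le hS
  have key : (n : ℝ) ^ 2 * (S + σtr 0) < ((n : ℝ) + 1) ^ 2 * S := by
    nlinarith [mul_le_mul_of_nonneg_left hS (by positivity : (0 : ℝ) ≤ n),
      mul_pos (by positivity : (0 : ℝ) < n) hSpos]
  rw [← div_eq_mul_inv, ← div_eq_mul_inv, div_lt_div_iff₀ hSpos (by positivity)]
  push_cast
  nlinarith [mul_lt_mul_of_pos_right key h0]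
end

section
/- Let n ≥ 1, let λ : ℕ → ℝ with 0 ≤ λ_k < 1 for every k, and let η² : ℕ → ℝ be non-negative. Set c_k = η_k² / (1 − λ_k²), assume the series ∑_{k} c_k converges to a positive value, and define for each k the quantity A_k = ∑_{i=1}^n ∑_{j=1}^n λ_k^{|i−j|}, the normalized weights p_k = c_k / (∑_r c_r), the marginal effective sample sizes ESS_k = n² / A_k, and the functional effective sample size ESS_F = n² (∑_k c_k) / (∑_k c_k A_k). Then the series ∑_k c_k A_k converges, ∑_k p_k / ESS_k converges, and ESS_F = (∑_k p_k / ESS_k)^{-1}; that is, ESS_F is the weighted harmonic mean of the marginal effective sample sizes ESS_k with weights p_k. -/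
/-!
Every power `λₖ^|i-j|` lies in `[0, 1]`, so `0 ≤ Aₖ ≤ n²` and `∑ cₖ Aₖ` converges by comparison
with `n² ∑ cₖ`. Termwise `pₖ / ESSₖ = cₖ Aₖ / (n² ∑ᵣ cᵣ)`, so pulling the constant out of the
series and inverting gives the harmonic-mean identity.
-/

open Finset

/-- For the FAR(1) model, the functional effective sample size
`ESS_F = n² (∑ₖ cₖ) / (∑ₖ cₖ Aₖ)` is the weighted harmonic mean of the marginal
effective sample sizes `ESSₖ = n²/Aₖ` with weights `pₖ = cₖ/∑ᵣ cᵣ`, where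
`cₖ = ηₖ²/(1 − λₖ²)` and `Aₖ = ∑ᵢ∑ⱼ λₖ^{|i−j|}`. -/
theorem functional_ess_harmonic_mean {n : ℕ} (hn : 1 ≤ n)
    (lam η2 : ℕ → ℝ)
    (hlam : ∀ k, 0 ≤ lam k ∧ lam k < 1) (hη : ∀ k, 0 ≤ η2 k)
    (c : ℕ → ℝ) (hc : ∀ k, c k = η2 k / (1 - lam k ^ 2))
    (hsum : Summable c) (hpos : 0 < ∑' k, c k)
    (A : ℕ → ℝ)
    (hA : ∀ k, A k = ∑ i ∈ Finset.range n, ∑ j ∈ Finset.range n,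
      lam k ^ ((i : ℤ) - (j : ℤ)).natAbs)
    (p : ℕ → ℝ) (hp : ∀ k, p k = c k / ∑' r, c r)
    (ESS : ℕ → ℝ) (hESS : ∀ k, ESS k = (n : ℝ) ^ 2 / A k) :
    Summable (fun k => c k * A k) ∧ Summable (fun k => p k / ESS k) ∧
      (n : ℝ) ^ 2 * (∑' k, c k) / (∑' k, c k * A k) = (∑' k, p k / ESS k)⁻¹ := by
  have hc0 : ∀ k, 0 ≤ c k := fun k => by
    rw [hc]
    exact div_nonneg (hη k) (by nlinarith [hlam k])
  have hA0 : ∀ k, 0 ≤ A k := fun k => by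
    rw [hA]
    exact sum_nonneg fun i _ => sum_nonneg fun j _ => pow_nonneg (hlam k).1 _
  have hAn : ∀ k, A k ≤ (n : ℝ) ^ 2 := fun k => by
    rw [hA]
    calc ∑ i ∈ range n, ∑ j ∈ range n, lam k ^ ((i : ℤ) - (j : ℤ)).natAbs
        ≤ ∑ i ∈ range n, ∑ j ∈ range n, (1 : ℝ) :=
          sum_le_sum fun i _ => sum_le_sum fun j _ =>
            pow_le_one₀ (hlam k).1 (hlam k).2.le
      _ = (n : ℝ) ^ 2 := by simp [sq]
  -- Each `A k` is at most `n²`, so `∑ c k * A k` is dominated by `n² ∑ c k`.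
  have hcA : Summable (fun k => c k * A k) :=
    Summable.of_nonneg_of_le (fun k => mul_nonneg (hc0 k) (hA0 k))
      (fun k => mul_le_mul_of_nonneg_left (hAn k) (hc0 k)) (hsum.mul_right _)
  -- The two series differ only by the constant factor `n² ∑ c r`.
  have hterm : (fun k => p k / ESS k) =
      fun k => c k * A k / ((n : ℝ) ^ 2 * ∑' r, c r) := by
    funext k
    rw [hp, hESS, div_div_div_eq, mul_comm (∑' r, c r)]
  refine ⟨hcA, ?_, ?_⟩
  · rw [hterm]
    exact hcA.div_const _
  · rw [hterm, tsum_div_const, inv_div]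
end
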